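/- Let {x_n} be the sequence generated by Algorithm 1 (under the hypotheses of Theorem 3.1). If p is a limit point of {x_n}, then p ∈ F, i.e., p ∈ GEP(f_i, A_i) for every i = 1,…,N and p is a fixed point of S_j for every j = 1,…,M. -/

import Mathlib

open scoped RealInnerProductSpace
open Filter Topology

/-- `p` is the metric projection of `x` onto `K`. -/
def IsProjOn {H : Type*} [NormedAddCommGroup H] (K : Set H) (x p : H) : Prop :=
  p ∈ K ∧ ∀ v ∈ K, ‖p - x‖ ≤ ‖v - x‖

/-!
For `u ∈ F` each step satisfies `‖zₙʲ - u‖² ≤ kₙ‖xₙ - u‖² - (1 - αₙ)(1 - e / 2α)‖ȳₙ - xₙ‖²`. Hence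
`F` lies in every `Cₙ`, and `xₙ`, a sequence of projections of `x₀` onto decreasing convex sets with
a common point, is Cauchy; so it converges to its cluster point `p`. As `xₙ₊₁ ∈ Cₙ₊₁`, also
`z̄ₙ → p`, and the displayed inequality then forces `ȳₙ → p`. By maximality of `iₙ` and `jₙ` all
`yₙⁱ` and `zₙʲ` converge to `p`. Passing to the limit in the equilibrium inequalities gives their
Minty form at `p`, and `Sⱼⁿ ȳₙ → p` gives `Sⱼ p = p` because the iterates `Sⱼⁿ` are uniformly
Lipschitz.
-/

/-- Conditions (A1)–(A4) on a bifunction `f : C × C → ℝ`; values of `f` off `C` are irrelevant. -/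
structure IsEquilibriumBifunctionOn {H : Type*} [NormedAddCommGroup H] [NormedSpace ℝ H]
    (C : Set H) (f : H → H → ℝ) : Prop where
  diag_eq_zero : ∀ x ∈ C, f x x = 0
  monotone : ∀ x ∈ C, ∀ y ∈ C, f x y + f y x ≤ 0
  limsup_segment_le : ∀ x ∈ C, ∀ y ∈ C, ∀ z ∈ C,
    limsup (fun t : ℝ => f (t • z + (1 - t) • x) y) (𝓝[>] 0) ≤ f x y
  convexOn : ∀ x ∈ C, ConvexOn ℝ C (f x)
  lowerSemicontinuousOn : ∀ x ∈ C, LowerSemicontinuousOn (f x) C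

section Definitions

variable {H : Type*} [NormedAddCommGroup H]

/-- `T` is strictly pseudocontractive on `C` with expansion factor `k` and constant `κ`: the
inequality satisfied by one iterate of an asymptotically `κ`-strictly pseudocontractive mapping. -/
def StrictlyPseudocontractiveOn (k κ : ℝ) (T : H → H) (C : Set H) : Prop :=
  ∀ x ∈ C, ∀ y ∈ C, ‖T x - T y‖ ^ 2 ≤ k * ‖x - y‖ ^ 2 + κ * ‖(x - T x) - (y - T y)‖ ^ 2

variable [InnerProductSpace ℝ H]

/-- `A` is `α`-inverse strongly monotone on `C`. -/
def InverseStronglyMonotoneOn (α : ℝ) (A : H → H) (C : Set H) : Prop :=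
  ∀ x ∈ C, ∀ y ∈ C, α * ‖A x - A y‖ ^ 2 ≤ ⟪A x - A y, x - y⟫

/-- The solution set `GEP(f, A)` of the generalized equilibrium problem on `C`. -/
def gepSolutions (C : Set H) (f : H → H → ℝ) (A : H → H) : Set H :=
  {v ∈ C | ∀ y ∈ C, 0 ≤ f v y + ⟪A v, y - v⟫}

/-- `y` solves the equilibrium problem regularized at `x` with parameter `r`; equivalently, `y` is
the value at `x - r A x` of the resolvent of `f`. -/
def IsResolventPoint (C : Set H) (f : H → H → ℝ) (A : H → H) (r : ℝ) (x y : H) : Prop :=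
  y ∈ C ∧ ∀ w ∈ C, 0 ≤ f y w + ⟪A x, w - y⟫ + (1 / r) * ⟪w - y, y - x⟫

/-- The set `F` of points of `C` solving all the generalized equilibrium problems and fixed by all
the mappings. Membership in `C` is explicit because both families may be empty. -/
def commonSolutions {ι J : Type*} (C : Set H) (f : ι → H → H → ℝ) (A : ι → H → H)
    (S : J → H → H) : Set H :=
  {v ∈ C | (∀ i, v ∈ gepSolutions C (f i) (A i)) ∧ ∀ j, Function.IsFixedPt (S j) v}

/-- The shrinking projection scheme of steps (v)–(vi): `x` starts in `C`, and each new iterate is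
the projection of `x 0` onto the part of the previous set that satisfies the test given by `z` and
the error `ε`. -/
structure IsShrinkingProjection (C : Set H) (ε : ℕ → ℝ) (z x : ℕ → H) (D : ℕ → Set H) :
    Prop where
  start_mem : x 0 ∈ C
  set_zero : D 0 = C
  set_succ : ∀ n, D (n + 1) = {v ∈ D n | ‖z n - v‖ ^ 2 ≤ ‖x n - v‖ ^ 2 + ε n}
  isProjOn_succ : ∀ n, IsProjOn (D (n + 1)) (x 0) (x (n + 1))

end Definitions

section Limits

variable {ι E : Type*} [NormedAddCommGroup E] {l : Filter ι} {p : E}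

lemma tendsto_of_norm_sub_le {x y y' : ι → E} (hx : Tendsto x l (𝓝 p)) (hy : Tendsto y l (𝓝 p))
    (h : ∀ n, ‖y' n - x n‖ ≤ ‖y n - x n‖) : Tendsto y' l (𝓝 p) := by
  have hyx : Tendsto (fun n => ‖y n - x n‖) l (𝓝 0) := by simpa using (hy.sub hx).norm
  simpa using (squeeze_zero_norm h hyx).add hx

lemma tendsto_zero_of_smul_tendsto_zero [NormedSpace ℝ E] {w : ι → ℝ} {v : ι → E} {δ : ℝ}
    (hδ : 0 < δ) (hw : ∀ᶠ n in l, δ ≤ w n) (h : Tendsto (fun n => w n • v n) l (𝓝 0)) :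
    Tendsto v l (𝓝 0) := by
  refine squeeze_zero_norm' (a := fun n => ‖w n • v n‖ / δ) ?_ (by simpa using h.norm.div_const δ)
  filter_upwards [hw] with n hn
  rw [le_div_iff₀ hδ, norm_smul, mul_comm]
  gcongr
  exact hn.trans (le_abs_self _)

lemma tendsto_of_norm_sq_le_sub {x y z : ι → E} {k w : ι → ℝ} {δ : ℝ} {u : E}
    (hx : Tendsto x l (𝓝 p)) (hz : Tendsto z l (𝓝 p)) (hk : Tendsto k l (𝓝 1))
    (hδ : 0 < δ) (hw : ∀ᶠ n in l, δ ≤ w n)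
    (h : ∀ n, ‖z n - u‖ ^ 2 ≤ k n * ‖x n - u‖ ^ 2 - w n * ‖y n - x n‖ ^ 2) :
    Tendsto y l (𝓝 p) := by
  have hgap : Tendsto (fun n => (k n * ‖x n - u‖ ^ 2 - ‖z n - u‖ ^ 2) / δ) l (𝓝 0) := by
    simpa using ((hk.mul ((hx.sub_const u).norm.pow 2)).sub
      ((hz.sub_const u).norm.pow 2)).div_const δ
  have hsq : Tendsto (fun n => ‖y n - x n‖ ^ 2) l (𝓝 0) := by
    refine squeeze_zero' (.of_forall fun _ => sq_nonneg _) ?_ hgap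
    filter_upwards [hw] with n hn
    rw [le_div_iff₀ hδ]
    linarith [h n, mul_le_mul_of_nonneg_right hn (sq_nonneg ‖y n - x n‖)]
  have hyx : Tendsto (fun n => y n - x n) l (𝓝 0) :=
    tendsto_zero_iff_norm_tendsto_zero.2 (by simpa using hsq.sqrt)
  simpa using hyx.add hx

lemma exists_pos_eventually_le_one_sub {a : ι → ℝ} (ha : ∀ n, a n ≤ 1) (hlim : limsup a l < 1) :
    ∃ δ > 0, ∀ᶠ n in l, δ ≤ 1 - a n := by
  obtain ⟨c, hac, hc1⟩ := exists_between hlim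
  have hbdd : IsBoundedUnder (· ≤ ·) l a := isBoundedUnder_of ⟨1, ha⟩
  refine ⟨1 - c, sub_pos.2 hc1, ?_⟩
  filter_upwards [eventually_lt_of_limsup_lt hac hbdd] with n hn
  linarith

lemma isFixedPt_of_lipschitzOnWith_iterate {X : Type*} [MetricSpace X] {T : X → X} {K : Set X}
    {L : NNReal} (hT : Set.MapsTo T K K) (hLip : ∀ n ≥ 1, LipschitzOnWith L T^[n] K)
    {y : ℕ → X} {p : X}
    (hyK : ∀ n, y n ∈ K) (hpK : p ∈ K) (hy : Tendsto y atTop (𝓝 p))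
    (hTy : Tendsto (fun n => T^[n] (y n)) atTop (𝓝 p)) : Function.IsFixedPt T p := by
  have hdist : Tendsto (fun n => dist (T^[n] (y n)) (T^[n] p)) atTop (𝓝 0) := by
    have hbound : Tendsto (fun n => L * dist (y n) p) atTop (𝓝 0) := by
      simpa using (tendsto_iff_dist_tendsto_zero.1 hy).const_mul (L : ℝ)
    refine squeeze_zero' (.of_forall fun _ => dist_nonneg) ?_ hbound
    filter_upwards [eventually_ge_atTop 1] with n hn
    exact (hLip n hn).dist_le_mul _ (hyK n) _ hpK
  have horbit : Tendsto (fun n => T^[n] p) atTop (𝓝 p) := hTy.congr_dist hdist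
  have hcont : ContinuousWithinAt T K p := (hLip 1 le_rfl).continuousOn p hpK
  have himage : Tendsto (fun n => T (T^[n] p)) atTop (𝓝 (T p)) :=
    hcont.tendsto.comp <| tendsto_nhdsWithin_iff.2
      ⟨horbit, .of_forall fun n => hT.iterate n hpK⟩
  have hshift : Tendsto (fun n => T (T^[n] p)) atTop (𝓝 p) := by
    simpa only [Function.iterate_succ_apply', Function.comp_def] using
      horbit.comp (tendsto_add_atTop_nat 1)
  exact tendsto_nhds_unique himage hshift

end Limits

section StrictPseudocontractions

variable {H : Type*} [NormedAddCommGroup H] {C : Set H} {T : H → H} {k κ : ℝ}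

lemma StrictlyPseudocontractiveOn.mono_left {k' : ℝ} (hT : StrictlyPseudocontractiveOn k κ T C)
    (hk : k ≤ k') : StrictlyPseudocontractiveOn k' κ T C := fun x hx y hy =>
  (hT x hx y hy).trans (by gcongr)

lemma strictlyPseudocontractiveOn_id (hk : 1 ≤ k) : StrictlyPseudocontractiveOn k κ id C := by
  intro x _ y _
  simpa using le_mul_of_one_le_left (sq_nonneg ‖x - y‖) hk

lemma StrictlyPseudocontractiveOn.lipschitzOnWith (hT : StrictlyPseudocontractiveOn k κ T C)
    (hk0 : 0 ≤ k) (hκ0 : 0 ≤ κ) (hκ1 : κ < 1) :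
    LipschitzOnWith ((√k + √κ) / (1 - √κ)).toNNReal T C := by
  refine .of_dist_le' fun x hx y hy => ?_
  rw [dist_eq_norm, dist_eq_norm]
  have hsqrt : 0 < 1 - √κ := sub_pos.2 ((Real.sqrt_lt' one_pos).2 (by simpa using hκ1))
  have hdisp : ‖(x - T x) - (y - T y)‖ ≤ ‖x - y‖ + ‖T x - T y‖ := by
    rw [sub_sub_sub_comm]
    exact norm_sub_le _ _
  have hroot : ‖T x - T y‖ ≤ √k * ‖x - y‖ + √κ * ‖(x - T x) - (y - T y)‖ := by
    refine le_of_sq_le_sq ((hT x hx y hy).trans ?_) (by positivity)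
    rw [add_sq, mul_pow, mul_pow, Real.sq_sqrt hk0, Real.sq_sqrt hκ0]
    have hcross : 0 ≤ 2 * (√k * ‖x - y‖) * (√κ * ‖(x - T x) - (y - T y)‖) := by positivity
    linarith
  rw [div_mul_eq_mul_div, le_div_iff₀ hsqrt]
  linarith [mul_le_mul_of_nonneg_left hdisp (Real.sqrt_nonneg κ)]

lemma isFixedPt_of_strictlyPseudocontractiveOn_iterate {k : ℕ → ℝ} (hT : Set.MapsTo T C C)
    (hκ0 : 0 ≤ κ) (hκ1 : κ < 1) (hk : BddAbove (Set.range k))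
    (hTk : ∀ n ≥ 1, StrictlyPseudocontractiveOn (k n) κ T^[n] C) {y : ℕ → H} {p : H}
    (hyC : ∀ n, y n ∈ C) (hpC : p ∈ C) (hy : Tendsto y atTop (𝓝 p))
    (hTy : Tendsto (fun n => T^[n] (y n)) atTop (𝓝 p)) : Function.IsFixedPt T p := by
  obtain ⟨K, hK⟩ := hk
  have hkK : ∀ n, k n ≤ max K 0 := fun n => (hK (Set.mem_range_self n)).trans (le_max_left _ _)
  exact isFixedPt_of_lipschitzOnWith_iterate hT
    (fun n hn => ((hTk n hn).mono_left (hkK n)).lipschitzOnWith (le_max_right _ _) hκ0 hκ1)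
    hyC hpC hy hTy

end StrictPseudocontractions

section Relaxation

variable {ι H : Type*} [NormedAddCommGroup H]

lemma tendsto_of_tendsto_relaxation [NormedSpace ℝ H] {l : Filter ι} {x y z s : ι → H}
    {a β : ι → ℝ} {δ b : ℝ} {p : H}
    (hx : Tendsto x l (𝓝 p)) (hy : Tendsto y l (𝓝 p)) (hz : Tendsto z l (𝓝 p))
    (ha : ∀ n, a n ∈ Set.Icc 0 1) (hδ : 0 < δ) (haδ : ∀ᶠ n in l, δ ≤ 1 - a n)
    (hb : b < 1) (hβ : ∀ n, β n ≤ b)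
    (hzs : ∀ n, z n = a n • x n + (1 - a n) • (β n • y n + (1 - β n) • s n)) :
    Tendsto s l (𝓝 p) := by
  have hbdd : IsBoundedUnder (· ≤ ·) l (norm ∘ fun n => 1 - a n) :=
    isBoundedUnder_of ⟨1, fun n => abs_le.2 ⟨by linarith [(ha n).2], by linarith [(ha n).1]⟩⟩
  have hweighted : Tendsto (fun n => ((1 - a n) * (1 - β n)) • (s n - y n)) l (𝓝 0) := by
    have hyx : Tendsto (fun n => y n - x n) l (𝓝 0) := by simpa using hy.sub hx
    have hdiff : Tendsto (fun n => (z n - x n) - (1 - a n) • (y n - x n)) l (𝓝 0) := by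
      simpa using (hz.sub hx).sub (hbdd.smul_tendsto_zero hyx)
    refine hdiff.congr fun n => ?_
    rw [hzs]
    module
  have hweight : ∀ᶠ n in l, δ * (1 - b) ≤ (1 - a n) * (1 - β n) := by
    filter_upwards [haδ] with n hn
    have hβn := hβ n
    gcongr
    linarith
  have hsy := tendsto_zero_of_smul_tendsto_zero (mul_pos hδ (sub_pos.2 hb)) hweight hweighted
  simpa using hsy.add hy

variable [InnerProductSpace ℝ H]

lemma norm_sq_smul_add_one_sub_smul (t : ℝ) (x y : H) :
    ‖t • x + (1 - t) • y‖ ^ 2 =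
      t * ‖x‖ ^ 2 + (1 - t) * ‖y‖ ^ 2 - t * (1 - t) * ‖x - y‖ ^ 2 := by
  rw [norm_add_sq_real, norm_sub_sq_real, norm_smul, norm_smul, mul_pow, mul_pow,
    real_inner_smul_left, real_inner_smul_right, Real.norm_eq_abs, Real.norm_eq_abs, sq_abs, sq_abs]
  ring

lemma norm_sq_smul_add_one_sub_smul_le {t : ℝ} (ht : t ∈ Set.Icc 0 1) (x y : H) :
    ‖t • x + (1 - t) • y‖ ^ 2 ≤ t * ‖x‖ ^ 2 + (1 - t) * ‖y‖ ^ 2 := by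
  rw [norm_sq_smul_add_one_sub_smul, sub_le_self_iff]
  exact mul_nonneg (mul_nonneg ht.1 (sub_nonneg.2 ht.2)) (sq_nonneg _)

variable {C : Set H} {T : H → H} {k κ β : ℝ} {y u : H}

lemma StrictlyPseudocontractiveOn.norm_sq_average_sub_fixedPt_le
    (hT : StrictlyPseudocontractiveOn k κ T C) (hk : 1 ≤ k) (hβ0 : 0 ≤ β) (hκβ : κ ≤ β)
    (hβ1 : β ≤ 1) (hy : y ∈ C) (hu : u ∈ C) (hfix : Function.IsFixedPt T u) :
    ‖β • y + (1 - β) • T y - u‖ ^ 2 ≤ k * ‖y - u‖ ^ 2 := by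
  have hTy : ‖T y - u‖ ^ 2 ≤ k * ‖y - u‖ ^ 2 + κ * ‖y - T y‖ ^ 2 := by
    simpa [hfix.eq] using hT y hy u hu
  have hsplit : β • y + (1 - β) • T y - u = β • (y - u) + (1 - β) • (T y - u) := by module
  rw [hsplit, norm_sq_smul_add_one_sub_smul, sub_sub_sub_cancel_right]
  calc β * ‖y - u‖ ^ 2 + (1 - β) * ‖T y - u‖ ^ 2 - β * (1 - β) * ‖y - T y‖ ^ 2
      ≤ β * (k * ‖y - u‖ ^ 2) + (1 - β) * (k * ‖y - u‖ ^ 2 + κ * ‖y - T y‖ ^ 2)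
          - β * (1 - β) * ‖y - T y‖ ^ 2 := by
        gcongr
        exact le_mul_of_one_le_left (sq_nonneg _) hk
    _ = k * ‖y - u‖ ^ 2 - (1 - β) * (β - κ) * ‖y - T y‖ ^ 2 := by ring
    _ ≤ k * ‖y - u‖ ^ 2 := sub_le_self _ <|
        mul_nonneg (mul_nonneg (sub_nonneg.2 hβ1) (sub_nonneg.2 hκβ)) (sq_nonneg _)

lemma StrictlyPseudocontractiveOn.norm_sq_relaxation_sub_fixedPt_le {a γ : ℝ} {x : H}
    (hT : StrictlyPseudocontractiveOn k κ T C) (hk : 1 ≤ k) (hβ0 : 0 ≤ β) (hκβ : κ ≤ β)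
    (hβ1 : β ≤ 1) (hy : y ∈ C) (hu : u ∈ C) (hfix : Function.IsFixedPt T u)
    (ha : a ∈ Set.Icc 0 1) (hγ : 0 ≤ γ)
    (hyx : ‖y - u‖ ^ 2 ≤ ‖x - u‖ ^ 2 - γ * ‖y - x‖ ^ 2) :
    ‖a • x + (1 - a) • (β • y + (1 - β) • T y) - u‖ ^ 2 ≤
      k * ‖x - u‖ ^ 2 - (1 - a) * γ * ‖y - x‖ ^ 2 := by
  have ha' : 0 ≤ 1 - a := sub_nonneg.2 ha.2
  have hsplit : a • x + (1 - a) • (β • y + (1 - β) • T y) - u =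
      a • (x - u) + (1 - a) • (β • y + (1 - β) • T y - u) := by module
  have havg := hT.norm_sq_average_sub_fixedPt_le hk hβ0 hκβ hβ1 hy hu hfix
  have hdecrease : k * ‖y - u‖ ^ 2 ≤ k * ‖x - u‖ ^ 2 - γ * ‖y - x‖ ^ 2 := by
    have hgain := le_mul_of_one_le_left (mul_nonneg hγ (sq_nonneg ‖y - x‖)) hk
    linarith [mul_le_mul_of_nonneg_left hyx (zero_le_one.trans hk)]
  rw [hsplit]
  calc ‖a • (x - u) + (1 - a) • (β • y + (1 - β) • T y - u)‖ ^ 2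
      ≤ a * ‖x - u‖ ^ 2 + (1 - a) * ‖β • y + (1 - β) • T y - u‖ ^ 2 :=
        norm_sq_smul_add_one_sub_smul_le ha _ _
    _ ≤ a * (k * ‖x - u‖ ^ 2) + (1 - a) * (k * ‖x - u‖ ^ 2 - γ * ‖y - x‖ ^ 2) := by
        gcongr
        · exact ha.1
        · exact le_mul_of_one_le_left (sq_nonneg _) hk
        · exact havg.trans hdecrease
    _ = k * ‖x - u‖ ^ 2 - (1 - a) * γ * ‖y - x‖ ^ 2 := by ring

end Relaxation

section Projections

variable {H : Type*} [NormedAddCommGroup H] [InnerProductSpace ℝ H]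

lemma IsProjOn.norm_sub_sq_add_le {K : Set H} {x p v : H} (hp : IsProjOn K x p)
    (hK : Convex ℝ K) (hv : v ∈ K) : ‖v - p‖ ^ 2 + ‖p - x‖ ^ 2 ≤ ‖v - x‖ ^ 2 := by
  have : Nonempty K := ⟨p, hp.1⟩
  have hinf : ‖x - p‖ = ⨅ w : K, ‖x - w‖ := by
    refine le_antisymm (le_ciInf fun w => ?_) (ciInf_le ⟨0, ?_⟩ (⟨p, hp.1⟩ : K))
    · simpa only [norm_sub_rev x] using hp.2 w w.2
    · exact Set.forall_mem_range.2 fun _ => norm_nonneg _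
  have hobtuse : ⟪x - p, v - p⟫ ≤ 0 := (norm_eq_iInf_iff_real_inner_le_zero hK hp.1).1 hinf v hv
  have hexpand : ‖v - x‖ ^ 2 = ‖v - p‖ ^ 2 - 2 * ⟪x - p, v - p⟫ + ‖p - x‖ ^ 2 := by
    rw [← sub_sub_sub_cancel_right v x p, norm_sub_sq_real, real_inner_comm, norm_sub_rev p x]
  linarith

lemma cauchySeq_of_isProjOn_antitone {D : ℕ → Set H} (hD : Antitone D)
    (hconv : ∀ n, Convex ℝ (D n)) {x₀ u : H} {x : ℕ → H} (hx : ∀ n, IsProjOn (D n) x₀ (x n))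
    (hu : ∀ n, u ∈ D n) : CauchySeq x := by
  have hpyth : ∀ n m, n ≤ m → ‖x m - x n‖ ^ 2 + ‖x n - x₀‖ ^ 2 ≤ ‖x m - x₀‖ ^ 2 :=
    fun n m hnm => (hx n).norm_sub_sq_add_le (hconv n) (hD hnm (hx m).1)
  have hmono : Monotone fun n => ‖x n - x₀‖ ^ 2 := fun n m hnm =>
    le_of_add_le_of_nonneg_right (hpyth n m hnm) (sq_nonneg _)
  have hbdd : BddAbove (Set.range fun n => ‖x n - x₀‖ ^ 2) :=
    ⟨‖u - x₀‖ ^ 2, Set.forall_mem_range.2 fun n =>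
      pow_le_pow_left₀ (norm_nonneg _) ((hx n).2 u (hu n)) 2⟩
  obtain ⟨s, hs⟩ : ∃ s, Tendsto (fun n => ‖x n - x₀‖ ^ 2) atTop (𝓝 s) :=
    ⟨_, tendsto_atTop_ciSup hmono hbdd⟩
  refine cauchySeq_of_le_tendsto_0' (fun n => √(s - ‖x n - x₀‖ ^ 2)) (fun n m hnm => ?_)
    (by simpa using (hs.const_sub s).sqrt)
  rw [dist_eq_norm, norm_sub_rev]
  exact Real.le_sqrt_of_sq_le (by linarith [hpyth n m hnm, hmono.ge_of_tendsto hs m])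

lemma convex_setOf_norm_sub_sq_le (z x : H) (ε : ℝ) :
    Convex ℝ {v | ‖z - v‖ ^ 2 ≤ ‖x - v‖ ^ 2 + ε} := by
  have hhalf : {v | ‖z - v‖ ^ 2 ≤ ‖x - v‖ ^ 2 + ε} =
      {v | innerₗ H (x - z) v ≤ (‖x‖ ^ 2 - ‖z‖ ^ 2 + ε) / 2} := by
    ext v
    simp only [Set.mem_ofPred_eq, norm_sub_sq_real, innerₗ_apply_apply, inner_sub_left]
    constructor <;> intro h <;> linarith
  rw [hhalf]
  exact convex_halfSpace_le (LinearMap.isLinear _) _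

end Projections

namespace IsShrinkingProjection

variable {H : Type*} [NormedAddCommGroup H] {C : Set H} {ε : ℕ → ℝ} {z x : ℕ → H} {D : ℕ → Set H}

lemma antitone (h : IsShrinkingProjection C ε z x D) : Antitone D :=
  antitone_nat_of_succ_le fun n => (h.set_succ n).trans_subset (Set.sep_subset _ _)

lemma isProjOn (h : IsShrinkingProjection C ε z x D) (n : ℕ) : IsProjOn (D n) (x 0) (x n) := by
  cases n with
  | zero => exact ⟨h.set_zero ▸ h.start_mem, by simp⟩
  | succ n => exact h.isProjOn_succ n

lemma mem (h : IsShrinkingProjection C ε z x D) (n : ℕ) : x n ∈ C :=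
  h.set_zero ▸ h.antitone (Nat.zero_le n) (h.isProjOn n).1

lemma mem_set (h : IsShrinkingProjection C ε z x D) {u : H} (hu : u ∈ C)
    (hstep : ∀ n, ‖z n - u‖ ^ 2 ≤ ‖x n - u‖ ^ 2 + ε n) (n : ℕ) : u ∈ D n := by
  induction n with
  | zero => rwa [h.set_zero]
  | succ n ih => rw [h.set_succ]; exact ⟨ih, hstep n⟩

lemma tendsto_test (h : IsShrinkingProjection C ε z x D) {p : H} (hx : Tendsto x atTop (𝓝 p))
    (hε : Tendsto ε atTop (𝓝 0)) : Tendsto z atTop (𝓝 p) := by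
  have hx' : Tendsto (fun n => x (n + 1)) atTop (𝓝 p) := hx.comp (tendsto_add_atTop_nat 1)
  have htest : ∀ n, ‖z n - x (n + 1)‖ ^ 2 ≤ ‖x n - x (n + 1)‖ ^ 2 + ε n := fun n =>
    ((h.set_succ n).subset (h.isProjOn_succ n).1).2
  have hbound : Tendsto (fun n => ‖x n - x (n + 1)‖ ^ 2 + ε n) atTop (𝓝 0) := by
    simpa using ((hx.sub hx').norm.pow 2).add hε
  have hsq := squeeze_zero (fun _ => sq_nonneg _) htest hbound
  have hsub : Tendsto (fun n => z n - x (n + 1)) atTop (𝓝 0) :=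
    tendsto_zero_iff_norm_tendsto_zero.2 (by simpa using hsq.sqrt)
  simpa using hsub.add hx'

variable [InnerProductSpace ℝ H]

lemma convex (h : IsShrinkingProjection C ε z x D) (hC : Convex ℝ C) (n : ℕ) :
    Convex ℝ (D n) := by
  induction n with
  | zero => rwa [h.set_zero]
  | succ n ih => rw [h.set_succ]; exact ih.inter (convex_setOf_norm_sub_sq_le _ _ _)

lemma cauchySeq (h : IsShrinkingProjection C ε z x D) (hC : Convex ℝ C) {u : H} (hu : u ∈ C)
    (hstep : ∀ n, ‖z n - u‖ ^ 2 ≤ ‖x n - u‖ ^ 2 + ε n) : CauchySeq x :=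
  cauchySeq_of_isProjOn_antitone h.antitone (h.convex hC) h.isProjOn (h.mem_set hu hstep)

end IsShrinkingProjection

section Equilibrium

variable {H : Type*} [NormedAddCommGroup H] [InnerProductSpace ℝ H] {C : Set H}
  {f : H → H → ℝ} {A : H → H} {α : ℝ}

lemma InverseStronglyMonotoneOn.continuousOn (hA : InverseStronglyMonotoneOn α A C)
    (hα : 0 < α) : ContinuousOn A C := by
  refine LipschitzOnWith.continuousOn (K := α⁻¹.toNNReal) (.of_dist_le' fun x hx y hy => ?_)
  rw [dist_eq_norm, dist_eq_norm, inv_mul_eq_div, le_div_iff₀' hα]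
  rcases (norm_nonneg (A x - A y)).eq_or_lt with hzero | hpos
  · simp [← hzero]
  · refine le_of_mul_le_mul_right ?_ hpos
    linarith [hA x hx y hy, real_inner_le_norm (A x - A y) (x - y)]

lemma IsResolventPoint.mul_inner_le {r : ℝ} {x y u : H} (hy : IsResolventPoint C f A r x y)
    (hf : ∀ v ∈ C, ∀ w ∈ C, f v w + f w v ≤ 0) (hr : 0 < r) (hu : u ∈ gepSolutions C f A) :
    r * ⟪A x - A u, y - u⟫ ≤ ⟪x - y, y - u⟫ := by
  have hsum : 0 ≤ -⟪A x - A u, y - u⟫ + (1 / r) * ⟪x - y, y - u⟫ := by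
    have hreg := hy.2 u hu.1
    have hsol := hu.2 y hy.1
    have hswap : ⟪u - y, y - x⟫ = ⟪x - y, y - u⟫ := by
      rw [real_inner_comm, ← neg_sub x y, ← neg_sub y u, inner_neg_neg]
    rw [hswap, ← neg_sub y u, inner_neg_right] at hreg
    rw [inner_sub_left]
    linarith [hf y hy.1 u hu.1]
  have hscaled := mul_nonneg hr.le hsum
  rw [mul_add, ← mul_assoc, mul_one_div_cancel hr.ne'] at hscaled
  linarith

lemma IsResolventPoint.norm_sub_sq_le {r : ℝ} {x y u : H} (hy : IsResolventPoint C f A r x y)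
    (hf : ∀ v ∈ C, ∀ w ∈ C, f v w + f w v ≤ 0) (hA : InverseStronglyMonotoneOn α A C)
    (hα : 0 < α) (hr : 0 < r) (hx : x ∈ C) (hu : u ∈ gepSolutions C f A) :
    ‖y - u‖ ^ 2 ≤ ‖x - u‖ ^ 2 - (1 - r / (2 * α)) * ‖y - x‖ ^ 2 := by
  have hexpand : ‖x - u‖ ^ 2 = ‖y - x‖ ^ 2 + 2 * ⟪x - y, y - u⟫ + ‖y - u‖ ^ 2 := by
    rw [← sub_add_sub_cancel x y u, norm_add_sq_real, norm_sub_rev x y]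
  -- Complete the square: `α g² - g d ≥ -d² / 4α` with `g = ‖A x - A u‖` and `d = ‖y - x‖`.
  have hinner : -(‖y - x‖ ^ 2 / (4 * α)) ≤ ⟪A x - A u, y - u⟫ := by
    have hism := hA x hx u hu.1
    have hcauchy := neg_le_of_abs_le (abs_real_inner_le_norm (A x - A u) (y - x))
    have hsplit : ⟪A x - A u, y - u⟫ = ⟪A x - A u, y - x⟫ + ⟪A x - A u, x - u⟫ := by
      rw [← inner_add_right, sub_add_sub_cancel]
    have hsquare : α * ‖A x - A u‖ ^ 2 - ‖A x - A u‖ * ‖y - x‖ + ‖y - x‖ ^ 2 / (4 * α) =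
        α * (‖A x - A u‖ - ‖y - x‖ / (2 * α)) ^ 2 := by
      field_simp
      ring
    linarith [mul_nonneg hα.le (sq_nonneg (‖A x - A u‖ - ‖y - x‖ / (2 * α)))]
  calc ‖y - u‖ ^ 2 = ‖x - u‖ ^ 2 - ‖y - x‖ ^ 2 - 2 * ⟪x - y, y - u⟫ := by linarith
    _ ≤ ‖x - u‖ ^ 2 - ‖y - x‖ ^ 2 - 2 * (r * -(‖y - x‖ ^ 2 / (4 * α))) := by
        have hstep := hy.mul_inner_le hf hr hu
        linarith [mul_le_mul_of_nonneg_left hinner hr.le]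
    _ = ‖x - u‖ ^ 2 - (1 - r / (2 * α)) * ‖y - x‖ ^ 2 := by
        field_simp
        ring

lemma IsEquilibriumBifunctionOn.neg_one_sub_mul_inner_le_segment
    (hf : IsEquilibriumBifunctionOn C f) (hC : Convex ℝ C) {p w g : H} (hp : p ∈ C) (hw : w ∈ C)
    (hminty : ∀ v ∈ C, f v p ≤ ⟪g, v - p⟫) {t : ℝ} (ht : t ∈ Set.Ioo 0 1) :
    -((1 - t) * ⟪g, w - p⟫) ≤ f (t • w + (1 - t) • p) w := by
  have ht' : 0 ≤ 1 - t := sub_nonneg.2 ht.2.le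
  have hu : t • w + (1 - t) • p ∈ C := hC hw hp ht.1.le ht' (add_sub_cancel _ _)
  have hconv := (hf.convexOn _ hu).2 hw hp ht.1.le ht' (add_sub_cancel _ _)
  have hdual : f (t • w + (1 - t) • p) p ≤ t * ⟪g, w - p⟫ := by
    rw [← real_inner_smul_right]
    convert hminty _ hu using 2
    module
  rw [hf.diag_eq_zero _ hu, smul_eq_mul, smul_eq_mul] at hconv
  have hprod : 0 ≤ t * (f (t • w + (1 - t) • p) w + (1 - t) * ⟪g, w - p⟫) := by
    linarith [mul_le_mul_of_nonneg_left hdual ht']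
  linarith [nonneg_of_mul_nonneg_right hprod ht.1]

lemma IsEquilibriumBifunctionOn.isBoundedUnder_segment (hf : IsEquilibriumBifunctionOn C f)
    (hC : Convex ℝ C) {p w : H} (hp : p ∈ C) (hw : w ∈ C) :
    IsBoundedUnder (· ≤ ·) (𝓝[>] (0 : ℝ)) fun t => f (t • w + (1 - t) • p) w := by
  have hmem : ∀ᶠ t : ℝ in 𝓝[>] 0, t • w + (1 - t) • p ∈ C := by
    filter_upwards [Ioo_mem_nhdsGT (zero_lt_one' ℝ)] with t ht
    exact hC hw hp ht.1.le (sub_nonneg.2 ht.2.le) (add_sub_cancel _ _)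
  have hseg : Tendsto (fun t : ℝ => t • w + (1 - t) • p) (𝓝[>] 0) (𝓝[C] p) :=
    tendsto_nhdsWithin_iff.2 ⟨(Continuous.tendsto' (by fun_prop) _ _ (by simp)).mono_left
      nhdsWithin_le_nhds, hmem⟩
  refine ⟨1 - f w p, eventually_map.2 ?_⟩
  filter_upwards [hmem, hseg.eventually
    (hf.lowerSemicontinuousOn w hw p hp (f w p - 1) (sub_one_lt _))] with t hut hlsc
  linarith [hf.monotone _ hut w hw]

lemma IsEquilibriumBifunctionOn.nonneg_of_minty (hf : IsEquilibriumBifunctionOn C f)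
    (hC : Convex ℝ C) {p w g : H} (hp : p ∈ C) (hw : w ∈ C)
    (hminty : ∀ v ∈ C, f v p ≤ ⟪g, v - p⟫) : 0 ≤ f p w + ⟪g, w - p⟫ := by
  have hlim : Tendsto (fun t : ℝ => -((1 - t) * ⟪g, w - p⟫)) (𝓝[>] 0) (𝓝 (-⟪g, w - p⟫)) :=
    (Continuous.tendsto' (by fun_prop) _ _ (by simp)).mono_left nhdsWithin_le_nhds
  have hle : -⟪g, w - p⟫ ≤ limsup (fun t : ℝ => f (t • w + (1 - t) • p) w) (𝓝[>] 0) := by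
    rw [← hlim.limsup_eq]
    refine limsup_le_limsup ?_ hlim.isCoboundedUnder_le (hf.isBoundedUnder_segment hC hp hw)
    filter_upwards [Ioo_mem_nhdsGT (zero_lt_one' ℝ)] with t ht
    exact hf.neg_one_sub_mul_inner_le_segment hC hp hw hminty ht
  linarith [hf.limsup_segment_le p hp w hw w hw]

lemma le_inner_of_tendsto_isResolventPoint {ι : Type*} {l : Filter ι} [l.NeBot]
    (hf : IsEquilibriumBifunctionOn C f) (hA : ContinuousOn A C) {r : ι → ℝ} {d : ℝ}
    (hd : 0 < d) (hr : ∀ n, d ≤ r n) {x y : ι → H} {p w : H} (hxC : ∀ n, x n ∈ C)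
    (hy : ∀ n, IsResolventPoint C f A (r n) (x n) (y n)) (hxp : Tendsto x l (𝓝 p))
    (hyp : Tendsto y l (𝓝 p)) (hp : p ∈ C) (hw : w ∈ C) : f w p ≤ ⟪A p, w - p⟫ := by
  have hAx : Tendsto (fun n => A (x n)) l (𝓝 (A p)) :=
    (hA p hp).tendsto.comp (tendsto_nhdsWithin_iff.2 ⟨hxp, .of_forall hxC⟩)
  have hr_bdd : IsBoundedUnder (· ≤ ·) l (norm ∘ fun n => 1 / r n) := by
    refine isBoundedUnder_of ⟨1 / d, fun n => ?_⟩
    have hrn : 0 < r n := hd.trans_le (hr n)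
    rw [Function.comp_apply, Real.norm_of_nonneg (one_div_nonneg.2 hrn.le)]
    exact one_div_le_one_div_of_le hd (hr n)
  have hinner : Tendsto (fun n => ⟪w - y n, y n - x n⟫) l (𝓝 0) := by
    simpa using (hyp.const_sub w).inner (𝕜 := ℝ) (hyp.sub hxp)
  have hrhs : Tendsto (fun n => ⟪A (x n), w - y n⟫ + (1 / r n) * ⟪w - y n, y n - x n⟫) l
      (𝓝 ⟪A p, w - p⟫) := by
    simpa using (hAx.inner (𝕜 := ℝ) (hyp.const_sub w)).add
      (isBoundedUnder_le_mul_tendsto_zero hr_bdd hinner)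
  have hyC : Tendsto y l (𝓝[C] p) :=
    tendsto_nhdsWithin_iff.2 ⟨hyp, .of_forall fun n => (hy n).1⟩
  refine le_of_forall_lt_imp_le_of_dense fun q hq => ge_of_tendsto hrhs ?_
  filter_upwards [hyC.eventually (hf.lowerSemicontinuousOn w hw p hp q hq)] with n hn
  linarith [(hy n).2 w hw, hf.monotone _ (hy n).1 w hw]

lemma mem_gepSolutions_of_tendsto_isResolventPoint {ι : Type*} {l : Filter ι} [l.NeBot]
    (hC : Convex ℝ C) (hf : IsEquilibriumBifunctionOn C f) (hA : ContinuousOn A C) {r : ι → ℝ}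
    {d : ℝ} (hd : 0 < d) (hr : ∀ n, d ≤ r n) {x y : ι → H} {p : H} (hxC : ∀ n, x n ∈ C)
    (hy : ∀ n, IsResolventPoint C f A (r n) (x n) (y n)) (hxp : Tendsto x l (𝓝 p))
    (hyp : Tendsto y l (𝓝 p)) (hp : p ∈ C) : p ∈ gepSolutions C f A :=
  ⟨hp, fun _ hw => hf.nonneg_of_minty hC hp hw fun _ hv =>
    le_inner_of_tendsto_isResolventPoint hf hA hd hr hxC hy hxp hyp hp hv⟩

end Equilibrium

section Algorithm

variable {H : Type*} [NormedAddCommGroup H]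

lemma mul_norm_sub_sq_le_add {k ω : ℝ} {x u : H} (hk : 1 ≤ k) (hu : ‖u‖ ≤ ω) :
    k * ‖x - u‖ ^ 2 ≤ ‖x - u‖ ^ 2 + (k - 1) * (‖x‖ + ω) ^ 2 := by
  have hnorm : ‖x - u‖ ≤ ‖x‖ + ω := (norm_sub_le x u).trans (by gcongr)
  have hsq : ‖x - u‖ ^ 2 ≤ (‖x‖ + ω) ^ 2 := pow_le_pow_left₀ (norm_nonneg _) hnorm 2
  linarith [mul_le_mul_of_nonneg_left hsq (sub_nonneg.2 hk)]

variable [InnerProductSpace ℝ H]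

lemma IsResolventPoint.norm_sq_relaxation_sub_le {C : Set H} {f : H → H → ℝ} {A T : H → H}
    {α r e k κ a β : ℝ} {x y u : H} (hy : IsResolventPoint C f A r x y)
    (hf : ∀ v ∈ C, ∀ w ∈ C, f v w + f w v ≤ 0) (hA : InverseStronglyMonotoneOn α A C)
    (hr0 : 0 < r) (hre : r ≤ e) (heα : e < 2 * α) (hx : x ∈ C) (hu : u ∈ gepSolutions C f A)
    (hT : StrictlyPseudocontractiveOn k κ T C) (hfix : Function.IsFixedPt T u) (hk : 1 ≤ k)
    (hβ0 : 0 ≤ β) (hκβ : κ ≤ β) (hβ1 : β ≤ 1) (ha : a ∈ Set.Icc 0 1) :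
    ‖a • x + (1 - a) • (β • y + (1 - β) • T y) - u‖ ^ 2 ≤
      k * ‖x - u‖ ^ 2 - (1 - a) * (1 - e / (2 * α)) * ‖y - x‖ ^ 2 := by
  have hα : 0 < α := by linarith
  have hγ : 0 ≤ 1 - e / (2 * α) := sub_nonneg.2 ((div_le_one (by positivity)).2 heα.le)
  have hyx : ‖y - u‖ ^ 2 ≤ ‖x - u‖ ^ 2 - (1 - e / (2 * α)) * ‖y - x‖ ^ 2 :=
    (hy.norm_sub_sq_le hf hA hα hr0 hx hu).trans (by gcongr)
  exact hT.norm_sq_relaxation_sub_fixedPt_le hk hβ0 hκβ hβ1 hy.1 hu.1 hfix ha hγ hyx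

theorem algorithm1_cluster_point_in_solution_set_general {ι J : Type*}
    {C : Set H} (hCcl : IsClosed C) (hCcv : Convex ℝ C)
    {f : ι → H → H → ℝ} (hf : ∀ i, IsEquilibriumBifunctionOn C (f i))
    {A : ι → H → H} {α : ℝ} (hA : ∀ i, InverseStronglyMonotoneOn α (A i) C)
    {S : J → H → H} (hS : ∀ j, Set.MapsTo (S j) C C)
    {κ : ℝ} (hκ0 : 0 ≤ κ) {k : ℕ → ℝ} (hk1 : ∀ n, 1 ≤ k n) (hklim : Tendsto k atTop (𝓝 1))
    (hasym : ∀ j, ∀ n ≥ 1, StrictlyPseudocontractiveOn (k n) κ (S j)^[n] C)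
    {u : H} (hu : u ∈ commonSolutions C f A S) {ω : ℝ} (huω : ‖u‖ ≤ ω)
    {a : ℕ → ℝ} (ha : ∀ n, a n ∈ Set.Icc 0 1) (halimsup : limsup a atTop < 1)
    {β : ℕ → ℝ} {b : ℝ} (hb1 : b < 1) (hβ : ∀ n, β n ∈ Set.Icc κ b)
    {r : ℕ → ℝ} {d e : ℝ} (hd : 0 < d) (he : e < 2 * α) (hr : ∀ n, r n ∈ Set.Icc d e)
    {x : ℕ → H} {y : ℕ → ι → H} {z : ℕ → J → H} {iN : ℕ → ι} {jM : ℕ → J} {D : ℕ → Set H}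
    (hy : ∀ n i, IsResolventPoint C (f i) (A i) (r n) (x n) (y n i))
    (hiN : ∀ n i, ‖y n i - x n‖ ≤ ‖y n (iN n) - x n‖)
    (hz : ∀ n j, z n j = a n • x n +
      (1 - a n) • (β n • y n (iN n) + (1 - β n) • (S j)^[n] (y n (iN n))))
    (hjM : ∀ n j, ‖z n j - x n‖ ≤ ‖z n (jM n) - x n‖)
    (hD : IsShrinkingProjection C (fun n => (k n - 1) * (‖x n‖ + ω) ^ 2)
      (fun n => z n (jM n)) x D)
    {p : H} (hp : MapClusterPt p atTop x) : p ∈ commonSolutions C f A S := by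
  obtain ⟨huC, huGEP, huS⟩ := hu
  obtain ⟨δ, hδ, haδ⟩ := exists_pos_eventually_le_one_sub (fun n => (ha n).2) halimsup
  have hr0 n : 0 < r n := hd.trans_le (hr n).1
  have hα : 0 < α := by linarith [hr0 0, (hr 0).2]
  have hγ : 0 < 1 - e / (2 * α) := sub_pos.2 ((div_lt_one (by positivity)).2 he)
  have hiter j n : StrictlyPseudocontractiveOn (k n) κ (S j)^[n] C :=
    n.eq_zero_or_pos.elim (fun h => h ▸ strictlyPseudocontractiveOn_id (hk1 0)) (hasym j n)
  have hfejer n : ‖z n (jM n) - u‖ ^ 2 ≤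
      k n * ‖x n - u‖ ^ 2 - (1 - a n) * (1 - e / (2 * α)) * ‖y n (iN n) - x n‖ ^ 2 :=
    hz n (jM n) ▸ (hy n _).norm_sq_relaxation_sub_le (hf _).monotone (hA _) (hr0 n) (hr n).2 he
      (hD.mem n) (huGEP _) (hiter _ n) ((huS _).iterate n) (hk1 n) (hκ0.trans (hβ n).1) (hβ n).1
      ((hβ n).2.trans hb1.le) (ha n)
  have htest n : ‖z n (jM n) - u‖ ^ 2 ≤ ‖x n - u‖ ^ 2 + (k n - 1) * (‖x n‖ + ω) ^ 2 :=
    (hfejer n).trans <| (sub_le_self _ (mul_nonneg (mul_nonneg (sub_nonneg.2 (ha n).2) hγ.le)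
      (sq_nonneg _))).trans (mul_norm_sub_sq_le_add (hk1 n) huω)
  have hx : Tendsto x atTop (𝓝 p) := le_nhds_of_cauchy_adhp (hD.cauchySeq hCcv huC htest) hp
  have hpC : p ∈ C := hCcl.mem_of_tendsto hx (.of_forall hD.mem)
  have hε : Tendsto (fun n => (k n - 1) * (‖x n‖ + ω) ^ 2) atTop (𝓝 0) := by
    simpa using (hklim.sub_const 1).mul ((hx.norm.add_const ω).pow 2)
  have hzbar : Tendsto (fun n => z n (jM n)) atTop (𝓝 p) := hD.tendsto_test hx hε
  have hybar : Tendsto (fun n => y n (iN n)) atTop (𝓝 p) :=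
    tendsto_of_norm_sq_le_sub hx hzbar hklim (mul_pos hδ hγ)
      (haδ.mono fun n hn => mul_le_mul_of_nonneg_right hn hγ.le) hfejer
  refine ⟨hpC, fun i => ?_, fun j => ?_⟩
  · have hyi := tendsto_of_norm_sub_le hx hybar fun n => hiN n i
    exact mem_gepSolutions_of_tendsto_isResolventPoint hCcv (hf i) ((hA i).continuousOn hα) hd
      (fun n => (hr n).1) hD.mem (fun n => hy n i) hx hyi hpC
  · have hzj := tendsto_of_norm_sub_le hx hzbar fun n => hjM n j
    have hSy := tendsto_of_tendsto_relaxation hx hybar hzj ha hδ haδ hb1 (fun n => (hβ n).2)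
      fun n => hz n j
    exact isFixedPt_of_strictlyPseudocontractiveOn_iterate (hS j) hκ0
      (((hβ 0).1.trans (hβ 0).2).trans_lt hb1) hklim.bddAbove_range (hasym j)
      (fun n => (hy n _).1) hpC hybar hSy

end Algorithm

/-- **Lemma 3.3.** If `p` is a limit point of the sequence `{xₙ}` generated
by Algorithm 1, then `p ∈ F`, i.e. `p` solves every generalized equilibrium problem
`GEP(fᵢ, Aᵢ)` and is a common fixed point of the mappings `Sⱼ`. -/
theorem algorithm1_cluster_point_in_solution_set
    {H : Type*} [NormedAddCommGroup H] [InnerProductSpace ℝ H] [CompleteSpace H]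
    (C : Set H) (hCne : C.Nonempty) (hCcl : IsClosed C) (hCcv : Convex ℝ C)
    (N M : ℕ) (hN : 0 < N) (hM : 0 < M)
    -- the bifunctions fᵢ satisfy (A1)-(A4)
    (f : Fin N → H → H → ℝ)
    (hfA1 : ∀ i, ∀ x ∈ C, f i x x = 0)
    (hfA2 : ∀ i, ∀ x ∈ C, ∀ y ∈ C, f i x y + f i y x ≤ 0)
    (hfA3 : ∀ i, ∀ x ∈ C, ∀ y ∈ C, ∀ z ∈ C,
      Filter.limsup (fun t : ℝ => f i (t • z + (1 - t) • x) y) (nhdsWithin 0 (Set.Ioi 0))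
        ≤ f i x y)
    (hfA4conv : ∀ i, ∀ x ∈ C, ConvexOn ℝ C (f i x))
    (hfA4lsc : ∀ i, ∀ x ∈ C, LowerSemicontinuousOn (f i x) C)
    -- the operators Aᵢ are α-inverse strongly monotone on C
    (A : Fin N → H → H) (α : ℝ) (hα : 0 < α)
    (hism : ∀ i, ∀ x ∈ C, ∀ y ∈ C, α * ‖A i x - A i y‖ ^ 2 ≤ ⟪A i x - A i y, x - y⟫)
    -- the mappings Sⱼ : C → C are asymptotically κ-strictly pseudocontractive with
    -- the same sequence {kₙ} ⊆ [1,∞), kₙ → 1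
    (S : Fin M → H → H) (hS : ∀ j, Set.MapsTo (S j) C C)
    (κ : ℝ) (hκ0 : 0 ≤ κ) (hκ1 : κ < 1)
    (k : ℕ → ℝ) (hk1 : ∀ n, 1 ≤ k n)
    (hklim : Filter.Tendsto k Filter.atTop (nhds 1))
    (hasym : ∀ j, ∀ n, 1 ≤ n → ∀ x ∈ C, ∀ y ∈ C,
      ‖(S j)^[n] x - (S j)^[n] y‖ ^ 2
        ≤ k n * ‖x - y‖ ^ 2 + κ * ‖(x - (S j)^[n] x) - (y - (S j)^[n] y)‖ ^ 2)
    -- the solution set F is nonempty and bounded by ω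
    (F : Set H)
    (hF : F = {v ∈ C | ∀ i, ∀ y ∈ C, 0 ≤ f i v y + ⟪A i v, y - v⟫} ∩
      {v | ∀ j, S j v = v})
    (hFne : F.Nonempty) (ω : ℝ) (hω : 0 < ω) (hFb : ∀ v ∈ F, ‖v‖ ≤ ω)
    -- control parameters
    (a : ℕ → ℝ) (ha0 : ∀ n, 0 < a n) (ha1 : ∀ n, a n < 1)
    (halimsup : Filter.limsup a Filter.atTop < 1)
    (β : ℕ → ℝ) (b : ℝ) (hbκ : κ < b) (hb1 : b < 1) (hβ : ∀ n, κ ≤ β n ∧ β n ≤ b)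
    (r : ℕ → ℝ) (d e : ℝ) (hd : 0 < d) (he : e < 2 * α) (hr : ∀ n, d ≤ r n ∧ r n ≤ e)
    -- the iterates of Algorithm 1
    (x : ℕ → H) (y : ℕ → Fin N → H) (z : ℕ → Fin M → H)
    (iN : ℕ → Fin N) (jM : ℕ → Fin M) (ybar zbar : ℕ → H) (Cset : ℕ → Set H)
    (hx0 : x 0 ∈ C) (hC0 : Cset 0 = C)
    -- (i) yₙⁱ solves the regularized generalized equilibrium problem
    (hy : ∀ n i, y n i ∈ C ∧ ∀ w ∈ C,
      0 ≤ f i (y n i) w + ⟪A i (x n), w - y n i⟫ +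
        (1 / r n) * ⟪w - y n i, y n i - x n⟫)
    -- (ii) iₙ maximizes ‖yₙⁱ - xₙ‖ and ȳₙ = yₙ^{iₙ}
    (hiN : ∀ n i, ‖y n i - x n‖ ≤ ‖y n (iN n) - x n‖)
    (hybar : ∀ n, ybar n = y n (iN n))
    -- (iii) zₙʲ = αₙ xₙ + (1-αₙ)(βₙ ȳₙ + (1-βₙ) Sⱼⁿ ȳₙ)
    (hz : ∀ n j, z n j = a n • x n +
      (1 - a n) • (β n • ybar n + (1 - β n) • (S j)^[n] (ybar n)))
    -- (iv) jₙ maximizes ‖zₙʲ - xₙ‖ and z̄ₙ = zₙ^{jₙ}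
    (hjM : ∀ n j, ‖z n j - x n‖ ≤ ‖z n (jM n) - x n‖)
    (hzbar : ∀ n, zbar n = z n (jM n))
    -- (v) Cₙ₊₁ = {v ∈ Cₙ : ‖z̄ₙ - v‖² ≤ ‖xₙ - v‖² + εₙ}, εₙ = (kₙ - 1)(‖xₙ‖ + ω)²
    (hCset : ∀ n, Cset (n + 1) =
      {v ∈ Cset n | ‖zbar n - v‖ ^ 2 ≤ ‖x n - v‖ ^ 2 + (k n - 1) * (‖x n‖ + ω) ^ 2})
    -- (vi) xₙ₊₁ = P_{Cₙ₊₁} x₀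
    (hxproj : ∀ n, IsProjOn (Cset (n + 1)) (x 0) (x (n + 1)))
    -- p is a limit point of {xₙ}
    (p : H) (hp : MapClusterPt p Filter.atTop x) :
    p ∈ F := by
  obtain rfl : ybar = fun n => y n (iN n) := funext hybar
  obtain rfl : zbar = fun n => z n (jM n) := funext hzbar
  have hF_eq : F = commonSolutions C f A S := by
    rw [hF]
    ext v
    exact ⟨fun ⟨⟨hv, hgep⟩, hfix⟩ => ⟨hv, fun i => ⟨hv, hgep i⟩, hfix⟩,
      fun ⟨hv, hgep, hfix⟩ => ⟨⟨hv, fun i => (hgep i).2⟩, hfix⟩⟩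
  obtain ⟨u, hu⟩ := hFne
  rw [hF_eq] at hu ⊢
  exact algorithm1_cluster_point_in_solution_set_general hCcl hCcv
    (fun i => ⟨hfA1 i, hfA2 i, hfA3 i, hfA4conv i, hfA4lsc i⟩) hism hS hκ0 hk1 hklim hasym
    hu (hFb u (hF_eq ▸ hu)) (fun n => ⟨(ha0 n).le, (ha1 n).le⟩) halimsup hb1 hβ hd he hr hy hiN
    hz hjM ⟨hx0, hC0, hCset, hxproj⟩ hp
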